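/- Identity (c5) of Appendix C: Let τ lie in the complex upper half-plane and let x, y ∈ ℂ be such that all theta-function values appearing in denominators below are nonzero (equivalently, the relevant arguments avoid the zeros of the theta functions). Then S''(x,τ)·ζ₁(y−x, τ/2) − S''(x,τ)·ζ₁(y, τ/2) + S'(x,τ)·℘₁(x−y, τ/2) + 2 S''(x,τ)·ζ₂(x, τ) − 2 S'(x,τ)·℘₂(x, τ) + S'(y,τ)·S''(y−x, τ) = 0. -/

import Mathlib

open Complex

/-- Jacobi theta function θ₁(u,τ). -/
noncomputable def theta1 (u τ : ℂ) : ℂ :=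
  -∑' k : ℤ, Complex.exp ((Real.pi : ℂ) * Complex.I * τ * ((k : ℂ) + 1/2)^2
      + 2 * (Real.pi : ℂ) * Complex.I * (u + 1/2) * ((k : ℂ) + 1/2))

/-- Jacobi theta function θ₂(u,τ). -/
noncomputable def theta2 (u τ : ℂ) : ℂ :=
  ∑' k : ℤ, Complex.exp ((Real.pi : ℂ) * Complex.I * τ * ((k : ℂ) + 1/2)^2
      + 2 * (Real.pi : ℂ) * Complex.I * u * ((k : ℂ) + 1/2))

/-- Jacobi theta function θ₃(u,τ). -/
noncomputable def theta3 (u τ : ℂ) : ℂ :=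
  ∑' k : ℤ, Complex.exp ((Real.pi : ℂ) * Complex.I * τ * (k : ℂ)^2
      + 2 * (Real.pi : ℂ) * Complex.I * u * (k : ℂ))

/-- Jacobi theta function θ₄(u,τ). -/
noncomputable def theta4 (u τ : ℂ) : ℂ :=
  ∑' k : ℤ, Complex.exp ((Real.pi : ℂ) * Complex.I * τ * (k : ℂ)^2
      + 2 * (Real.pi : ℂ) * Complex.I * (u + 1/2) * (k : ℂ))

/-- ζ_a(u,τ) = θ_a'(u,τ)/θ_a(u,τ). -/
noncomputable def zeta1 (u τ : ℂ) : ℂ := deriv (fun v => theta1 v τ) u / theta1 u τ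
noncomputable def zeta2 (u τ : ℂ) : ℂ := deriv (fun v => theta2 v τ) u / theta2 u τ
noncomputable def zeta3 (u τ : ℂ) : ℂ := deriv (fun v => theta3 v τ) u / theta3 u τ
noncomputable def zeta4 (u τ : ℂ) : ℂ := deriv (fun v => theta4 v τ) u / theta4 u τ

/-- ℘_a(u,τ) = −∂_u ζ_a(u,τ). -/
noncomputable def wp1 (u τ : ℂ) : ℂ := -deriv (fun v => zeta1 v τ) u
noncomputable def wp2 (u τ : ℂ) : ℂ := -deriv (fun v => zeta2 v τ) u
noncomputable def wp1' (u τ : ℂ) : ℂ := deriv (fun v => wp1 v τ) u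
noncomputable def wp2' (u τ : ℂ) : ℂ := deriv (fun v => wp2 v τ) u

/-- S'(u,τ) = ζ₁(u,τ) − ζ₄(u,τ). -/
noncomputable def Sp (u τ : ℂ) : ℂ := zeta1 u τ - zeta4 u τ
/-- S''(u,τ) = ∂_u S'(u,τ). -/
noncomputable def Spp (u τ : ℂ) : ℂ := deriv (fun v => Sp v τ) u
/-- S'''(u,τ) = ∂_u S''(u,τ). -/
noncomputable def Sppp (u τ : ℂ) : ℂ := deriv (fun v => Spp v τ) u

/-- Partial derivative in the j-th coordinate of a ℂ-valued function on ℝ^N. -/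
noncomputable def pdC {N : ℕ} (j : Fin N) (f : (Fin N → ℝ) → ℂ) (x : Fin N → ℝ) : ℂ :=
  fderiv ℝ f x (Pi.single j 1)

/-- Partial derivative in the j-th coordinate of an ℝ-valued function on ℝ^d. -/
noncomputable def pd {d : ℕ} (j : Fin d) (f : (Fin d → ℝ) → ℝ) (x : Fin d → ℝ) : ℝ :=
  fderiv ℝ f x (Pi.single j 1)

/-!
Write `C = θ₁'(0,τ) / θ₂(0,τ)`. The product formula
`θ₂(a,τ) θ₂(b,τ) = θ₂(a+b,2τ) θ₃(a-b,2τ) + θ₃(a+b,2τ) θ₂(a-b,2τ)` and its half-period translate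
for `θ₁` have two kinds of consequences. Setting `b = 0` in them, or differentiating there, gives
`S'(u,2τ) = C θ₂(u,τ) / θ₁(u,τ)` and expresses `ζ₂(u,2τ)` through functions of modulus `τ`.
Eliminating the functions of modulus `2τ` gives a three-term relation between `θ₁` and `θ₂`, whose
infinitesimal form is an addition formula for `ζ₁`. Together they show that
`S'(u,2τ) (ζ₁(y-u,τ) - ζ₁(y,τ) + 2 ζ₂(u,2τ)) - S'(y,2τ) S'(y-u,2τ)` does not depend on `u`: it is
equal to `-C²`. Identity (c5), with `τ` halved, is the `u`-derivative of this statement.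
-/

open scoped Topology

section Shift

variable {𝕜 F : Type*} [NontriviallyNormedField 𝕜] [NormedAddCommGroup F] [NormedSpace 𝕜 F]
  {f : 𝕜 → F} {a : 𝕜}

lemma hasDerivAt_comp_const_add_zero (hf : DifferentiableAt 𝕜 f a) :
    HasDerivAt (fun t ↦ f (a + t)) (deriv f a) 0 :=
  HasDerivAt.comp_const_add a 0 (by simpa only [add_zero] using hf.hasDerivAt)

lemma hasDerivAt_comp_const_sub_zero (hf : DifferentiableAt 𝕜 f a) :
    HasDerivAt (fun t ↦ f (a - t)) (-deriv f a) 0 :=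
  HasDerivAt.comp_const_sub a 0 (by simpa only [sub_zero] using hf.hasDerivAt)

end Shift

/-- The pairs of integers split according to the parity of their sum, the two halves being
parametrized by `(a, b) ↦ (a + b, a - b)` and `(a, b) ↦ (a + b + 1, a - b)`. -/
def intSumDiffEquiv : (ℤ × ℤ) ⊕ (ℤ × ℤ) ≃ ℤ × ℤ where
  toFun := Sum.elim (fun p ↦ (p.1 + p.2, p.1 - p.2)) (fun p ↦ (p.1 + p.2 + 1, p.1 - p.2))
  invFun p :=
    if (p.1 + p.2) % 2 = 0 then Sum.inl ((p.1 + p.2) / 2, (p.1 - p.2) / 2)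
    else Sum.inr ((p.1 + p.2 - 1) / 2, (p.1 - p.2 - 1) / 2)
  left_inv := by
    rintro (⟨a, b⟩ | ⟨a, b⟩)
    · have h : (a + b + (a - b)) % 2 = 0 := by lia
      simp only [Sum.elim_inl, h, if_true]
      congr 2 <;> lia
    · have h : ¬ (a + b + 1 + (a - b)) % 2 = 0 := by lia
      simp only [Sum.elim_inr, h, if_false]
      congr 2 <;> lia
  right_inv := by
    rintro ⟨k, l⟩
    by_cases h : (k + l) % 2 = 0
    · simp only [h, if_true, Sum.elim_inl, Prod.mk.injEq]
      lia
    · simp only [h, if_false, Sum.elim_inr, Prod.mk.injEq]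
      lia

/-- The `k`-th term of the theta series with characteristic `α`. -/
noncomputable def thetaCharTerm (α u τ : ℂ) (k : ℤ) : ℂ :=
  cexp (Real.pi * I * τ * (k + α) ^ 2 + 2 * Real.pi * I * u * (k + α))

/-- The theta function with characteristic `α` (and second characteristic `0`). It interpolates
between `θ₃`, which is the case `α = 0`, and `θ₂`, which is the case `α = 1 / 2`. -/
noncomputable def thetaChar (α u τ : ℂ) : ℂ :=
  ∑' k : ℤ, thetaCharTerm α u τ k

section thetaChar

variable {τ : ℂ} (α β u v : ℂ)

lemma thetaCharTerm_eq_jacobiTheta₂_term (τ : ℂ) (k : ℤ) :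
    thetaCharTerm α u τ k = cexp (Real.pi * I * τ * α ^ 2 + 2 * Real.pi * I * u * α) *
      jacobiTheta₂_term k (u + α * τ) τ := by
  rw [thetaCharTerm, jacobiTheta₂_term, ← Complex.exp_add]
  ring_nf

lemma thetaChar_eq_jacobiTheta₂ (τ : ℂ) :
    thetaChar α u τ = cexp (Real.pi * I * τ * α ^ 2 + 2 * Real.pi * I * u * α) *
      jacobiTheta₂ (u + α * τ) τ := by
  simp only [thetaChar, thetaCharTerm_eq_jacobiTheta₂_term, tsum_mul_left, jacobiTheta₂]

lemma summable_norm_thetaCharTerm (hτ : 0 < τ.im) :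
    Summable fun k ↦ ‖thetaCharTerm α u τ k‖ := by
  simp only [thetaCharTerm_eq_jacobiTheta₂_term]
  exact (((summable_jacobiTheta₂_term_iff _ τ).mpr hτ).mul_left _).norm

lemma differentiable_thetaChar (hτ : 0 < τ.im) : Differentiable ℂ (thetaChar α · τ) := by
  simp only [thetaChar_eq_jacobiTheta₂]
  intro u
  have hJ : DifferentiableAt ℂ (fun v ↦ jacobiTheta₂ (v + α * τ) τ) u :=
    (differentiableAt_jacobiTheta₂_fst _ hτ).comp u (by fun_prop)
  fun_prop

lemma thetaChar_neg_neg (τ : ℂ) : thetaChar (-α) (-u) τ = thetaChar α u τ := by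
  rw [thetaChar, thetaChar, ← (Equiv.neg ℤ).tsum_eq]
  refine tsum_congr fun k ↦ ?_
  simp only [thetaCharTerm, Equiv.neg_apply]
  push_cast
  ring_nf

lemma thetaChar_add_one_left (τ : ℂ) : thetaChar (α + 1) u τ = thetaChar α u τ := by
  rw [thetaChar, thetaChar, ← (Equiv.addRight (1 : ℤ)).tsum_eq (thetaCharTerm α u τ)]
  refine tsum_congr fun k ↦ ?_
  simp only [thetaCharTerm, Equiv.coe_addRight]
  push_cast
  ring_nf

lemma thetaChar_add_one_right (τ : ℂ) :
    thetaChar α (u + 1) τ = cexp (2 * Real.pi * I * α) * thetaChar α u τ := by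
  rw [thetaChar_eq_jacobiTheta₂, thetaChar_eq_jacobiTheta₂, add_right_comm, jacobiTheta₂_add_left,
    ← mul_assoc, ← Complex.exp_add]
  ring_nf

lemma thetaCharTerm_mul_thetaCharTerm_even (τ : ℂ) (a b : ℤ) :
    thetaCharTerm α u τ (a + b) * thetaCharTerm β v τ (a - b) =
      thetaCharTerm ((α + β) / 2) (u + v) (2 * τ) a *
        thetaCharTerm ((α - β) / 2) (u - v) (2 * τ) b := by
  simp only [thetaCharTerm, ← Complex.exp_add]
  push_cast
  ring_nf

lemma thetaCharTerm_mul_thetaCharTerm_odd (τ : ℂ) (a b : ℤ) :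
    thetaCharTerm α u τ (a + b + 1) * thetaCharTerm β v τ (a - b) =
      thetaCharTerm ((α + β + 1) / 2) (u + v) (2 * τ) a *
        thetaCharTerm ((α - β + 1) / 2) (u - v) (2 * τ) b := by
  simp only [thetaCharTerm, ← Complex.exp_add]
  push_cast
  ring_nf

theorem thetaChar_mul_thetaChar (hτ : 0 < τ.im) :
    thetaChar α u τ * thetaChar β v τ =
      thetaChar ((α + β) / 2) (u + v) (2 * τ) * thetaChar ((α - β) / 2) (u - v) (2 * τ) +
      thetaChar ((α + β + 1) / 2) (u + v) (2 * τ) *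
        thetaChar ((α - β + 1) / 2) (u - v) (2 * τ) := by
  have h2τ : 0 < (2 * τ).im := by simpa using hτ
  have tsum_mul (γ δ : ℂ) (z w : ℂ) {σ : ℂ} (hσ : 0 < σ.im) : thetaChar γ z σ * thetaChar δ w σ =
      ∑' p : ℤ × ℤ, thetaCharTerm γ z σ p.1 * thetaCharTerm δ w σ p.2 :=
    tsum_mul_tsum_of_summable_norm (summable_norm_thetaCharTerm γ z hσ)
      (summable_norm_thetaCharTerm δ w hσ)
  have hsum : Summable ((fun p : ℤ × ℤ ↦ thetaCharTerm α u τ p.1 * thetaCharTerm β v τ p.2) ∘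
      intSumDiffEquiv) :=
    intSumDiffEquiv.summable_iff.mpr (summable_mul_of_summable_norm
      (summable_norm_thetaCharTerm α u hτ) (summable_norm_thetaCharTerm β v hτ))
  rw [tsum_mul _ _ _ _ hτ, tsum_mul _ _ _ _ h2τ, tsum_mul _ _ _ _ h2τ,
    ← intSumDiffEquiv.tsum_eq]
  simp only [← thetaCharTerm_mul_thetaCharTerm_even, ← thetaCharTerm_mul_thetaCharTerm_odd]
  exact Summable.tsum_sum (hsum.comp_injective Sum.inl_injective)
    (hsum.comp_injective Sum.inr_injective)

end thetaChar

section theta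

variable {τ : ℂ}

lemma theta2_eq_thetaChar (u τ : ℂ) : theta2 u τ = thetaChar (1 / 2) u τ := rfl

lemma theta3_eq_thetaChar (u τ : ℂ) : theta3 u τ = thetaChar 0 u τ := by
  simp only [theta3, thetaChar, thetaCharTerm, add_zero]

lemma theta1_eq_neg_theta2_add_half (u τ : ℂ) : theta1 u τ = -theta2 (u + 1 / 2) τ := rfl

lemma theta4_eq_theta3_add_half (u τ : ℂ) : theta4 u τ = theta3 (u + 1 / 2) τ := rfl

lemma theta2_neg (u τ : ℂ) : theta2 (-u) τ = theta2 u τ := by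
  have h := thetaChar_add_one_left (-(1 / 2)) (-u) τ
  rwa [thetaChar_neg_neg, show -(1 / 2) + 1 = (1 / 2 : ℂ) by norm_num] at h

lemma theta2_add_one (u τ : ℂ) : theta2 (u + 1) τ = -theta2 u τ := by
  rw [theta2_eq_thetaChar, thetaChar_add_one_right,
    show 2 * Real.pi * I * (1 / 2) = Real.pi * I by ring, Complex.exp_pi_mul_I, neg_one_mul,
    theta2_eq_thetaChar]

lemma theta3_add_one (u τ : ℂ) : theta3 (u + 1) τ = theta3 u τ := by
  rw [theta3_eq_thetaChar, theta3_eq_thetaChar, thetaChar_add_one_right, mul_zero,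
    Complex.exp_zero, one_mul]

lemma theta1_add_half (u τ : ℂ) : theta1 (u + 1 / 2) τ = theta2 u τ := by
  rw [theta1_eq_neg_theta2_add_half, add_assoc, add_halves, theta2_add_one, neg_neg]

lemma theta1_neg (u τ : ℂ) : theta1 (-u) τ = -theta1 u τ := by
  rw [theta1_eq_neg_theta2_add_half, ← theta2_neg, ← theta1_add_half,
    show -(-u + 1 / 2) + 1 / 2 = u by ring]

lemma theta1_zero (τ : ℂ) : theta1 0 τ = 0 := by
  have h := theta1_neg 0 τ
  rwa [neg_zero, self_eq_neg] at h

lemma differentiable_theta2 (hτ : 0 < τ.im) : Differentiable ℂ (theta2 · τ) :=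
  differentiable_thetaChar (1 / 2) hτ

lemma differentiable_theta3 (hτ : 0 < τ.im) : Differentiable ℂ (theta3 · τ) := by
  simpa only [theta3_eq_thetaChar] using differentiable_thetaChar 0 hτ

lemma differentiable_theta1 (hτ : 0 < τ.im) : Differentiable ℂ (theta1 · τ) :=
  ((differentiable_theta2 hτ).comp (differentiable_id.add_const (1 / 2))).neg

lemma differentiable_theta4 (hτ : 0 < τ.im) : Differentiable ℂ (theta4 · τ) :=
  (differentiable_theta3 hτ).comp (differentiable_id.add_const (1 / 2))

lemma deriv_theta1 (u τ : ℂ) : deriv (theta1 · τ) u = -deriv (theta2 · τ) (u + 1 / 2) := by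
  simp only [theta1_eq_neg_theta2_add_half]
  rw [deriv.fun_neg, deriv_comp_add_const (theta2 · τ)]

lemma deriv_theta4 (u τ : ℂ) : deriv (theta4 · τ) u = deriv (theta3 · τ) (u + 1 / 2) := by
  simp only [theta4_eq_theta3_add_half]
  rw [deriv_comp_add_const (theta3 · τ)]

lemma deriv_theta2_zero (τ : ℂ) : deriv (theta2 · τ) 0 = 0 := by
  have h := deriv_comp_neg (theta2 · τ) 0
  simp only [theta2_neg, neg_zero] at h
  rwa [self_eq_neg] at h

end theta

section Product

variable {τ : ℂ}

theorem theta2_mul_theta2 (hτ : 0 < τ.im) (a b : ℂ) :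
    theta2 a τ * theta2 b τ =
      theta2 (a + b) (2 * τ) * theta3 (a - b) (2 * τ) +
      theta3 (a + b) (2 * τ) * theta2 (a - b) (2 * τ) := by
  have h := thetaChar_mul_thetaChar (1 / 2) (1 / 2) a b hτ
  rw [add_halves, sub_self, zero_div, zero_add, add_self_div_two] at h
  simpa only [theta2_eq_thetaChar, theta3_eq_thetaChar, ← thetaChar_add_one_left 0,
    zero_add] using h

theorem theta1_mul_theta1 (hτ : 0 < τ.im) (a b : ℂ) :
    theta1 a τ * theta1 b τ =
      theta3 (a + b) (2 * τ) * theta2 (a - b) (2 * τ) -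
      theta2 (a + b) (2 * τ) * theta3 (a - b) (2 * τ) := by
  have h := theta2_mul_theta2 hτ (a + 1 / 2) (b + 1 / 2)
  rw [add_add_add_comm, add_halves, add_sub_add_right_eq_sub, theta2_add_one,
    theta3_add_one] at h
  rw [theta1_eq_neg_theta2_add_half, theta1_eq_neg_theta2_add_half, neg_mul_neg, h]
  ring

lemma theta2_zero_mul_theta2 (hτ : 0 < τ.im) (u : ℂ) :
    theta2 0 τ * theta2 u τ = 2 * (theta2 u (2 * τ) * theta3 u (2 * τ)) := by
  have h := theta2_mul_theta2 hτ u 0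
  rw [add_zero, sub_zero] at h
  linear_combination h

lemma theta2_zero_mul_theta1 (hτ : 0 < τ.im) (u : ℂ) :
    theta2 0 τ * theta1 u τ = 2 * (theta1 u (2 * τ) * theta4 u (2 * τ)) := by
  simp only [theta1_eq_neg_theta2_add_half, theta4_eq_theta3_add_half]
  linear_combination -theta2_zero_mul_theta2 hτ (u + 1 / 2)

lemma theta2_zero_mul_deriv_theta2 (hτ : 0 < τ.im) (u : ℂ) :
    theta2 0 τ * deriv (theta2 · τ) u =
      2 * (deriv (theta2 · (2 * τ)) u * theta3 u (2 * τ) +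
        theta2 u (2 * τ) * deriv (theta3 · (2 * τ)) u) := by
  have h2τ : 0 < (2 * τ).im := by simpa using hτ
  have h := congrArg (deriv · u) (funext (theta2_zero_mul_theta2 hτ))
  simpa only [deriv_const_mul_field, deriv_fun_mul (differentiable_theta2 h2τ u)
    (differentiable_theta3 h2τ u)] using h

lemma deriv_theta1_zero_mul_theta1 (hτ : 0 < τ.im) (u : ℂ) :
    deriv (theta1 · τ) 0 * theta1 u τ =
      2 * (theta2 u (2 * τ) * deriv (theta3 · (2 * τ)) u -
        deriv (theta2 · (2 * τ)) u * theta3 u (2 * τ)) := by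
  have h2τ : 0 < (2 * τ).im := by simpa using hτ
  have d2 := differentiable_theta2 h2τ u
  have d3 := differentiable_theta3 h2τ u
  have hleft := (differentiable_theta1 hτ 0).hasDerivAt.const_mul (theta1 u τ)
  have hright := ((hasDerivAt_comp_const_add_zero d3).mul (hasDerivAt_comp_const_sub_zero d2)).sub
    ((hasDerivAt_comp_const_add_zero d2).mul (hasDerivAt_comp_const_sub_zero d3))
  have h := hleft.unique (hright.congr_of_eventuallyEq (.of_forall (theta1_mul_theta1 hτ u)))
  simp only [add_zero, sub_zero] at h
  linear_combination h

lemma deriv_theta1_zero_mul_theta2 (hτ : 0 < τ.im) (u : ℂ) :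
    deriv (theta1 · τ) 0 * theta2 u τ =
      2 * (deriv (theta1 · (2 * τ)) u * theta4 u (2 * τ) -
        theta1 u (2 * τ) * deriv (theta4 · (2 * τ)) u) := by
  have h := deriv_theta1_zero_mul_theta1 hτ (u + 1 / 2)
  rw [theta1_add_half] at h
  rw [deriv_theta1 u, deriv_theta4, theta1_eq_neg_theta2_add_half u, theta4_eq_theta3_add_half]
  linear_combination h

end Product

section Addition

variable {τ : ℂ}

theorem theta_three_term (hτ : 0 < τ.im) (a b c d : ℂ) :
    theta2 (a + b) τ * theta2 (a - b) τ * (theta1 (c + d) τ * theta1 (c - d) τ) =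
      theta2 (a + c) τ * theta2 (a - c) τ * (theta1 (b + d) τ * theta1 (b - d) τ) +
      theta2 (a + d) τ * theta2 (a - d) τ * (theta1 (c + b) τ * theta1 (c - b) τ) := by
  simp only [theta2_mul_theta2 hτ, theta1_mul_theta1 hτ, add_add_sub_cancel, add_sub_sub_cancel]
  ring

lemma theta_three_term_shift (hτ : 0 < τ.im) (u w t : ℂ) :
    theta2 (u + t) τ * theta2 t τ * (theta1 (u + w) τ * theta1 w τ) =
      theta2 (u + w) τ * theta2 w τ * (theta1 (u + t) τ * theta1 t τ) +
      theta2 u τ * theta2 0 τ * (theta1 (u + w + t) τ * theta1 (w - t) τ) := by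
  have h := theta_three_term hτ (u / 2) (u / 2 + t) (u / 2 + w) (u / 2)
  ring_nf at h ⊢
  simp only [theta2_neg] at h
  linear_combination h

theorem theta1_theta2_addition (hτ : 0 < τ.im) (u w : ℂ) :
    theta2 0 τ * (deriv (theta2 · τ) u * theta1 w τ * theta1 (u + w) τ +
        theta2 u τ * deriv (theta1 · τ) w * theta1 (u + w) τ -
        theta2 u τ * theta1 w τ * deriv (theta1 · τ) (u + w)) =
      deriv (theta1 · τ) 0 * theta1 u τ * theta2 w τ * theta2 (u + w) τ := by
  have d1 := differentiable_theta1 hτ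
  have d2 := differentiable_theta2 hτ
  have hleft := ((hasDerivAt_comp_const_add_zero (d2 u)).mul (d2 0).hasDerivAt).mul_const
    (theta1 (u + w) τ * theta1 w τ)
  have hright := (((hasDerivAt_comp_const_add_zero (d1 u)).mul (d1 0).hasDerivAt).const_mul
      (theta2 (u + w) τ * theta2 w τ)).add
    (((hasDerivAt_comp_const_add_zero (d1 (u + w))).mul
      (hasDerivAt_comp_const_sub_zero (d1 w))).const_mul (theta2 u τ * theta2 0 τ))
  have h := hleft.unique
    (hright.congr_of_eventuallyEq (.of_forall (theta_three_term_shift hτ u w)))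
  simp only [add_zero, sub_zero, theta1_zero, deriv_theta2_zero] at h
  linear_combination h

end Addition

section Zeta

variable {τ u w : ℂ}

/-- The constant `θ₁'(0,τ) / θ₂(0,τ)`, which normalizes `θ₂(u,τ) / θ₁(u,τ)` to have residue `1` at
`u = 0`. -/
noncomputable def thetaConst (τ : ℂ) : ℂ :=
  deriv (theta1 · τ) 0 / theta2 0 τ

lemma differentiableAt_zeta1 (hτ : 0 < τ.im) (h1 : theta1 u τ ≠ 0) :
    DifferentiableAt ℂ (zeta1 · τ) u :=
  ((differentiable_theta1 hτ).deriv u).div (differentiable_theta1 hτ u) h1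

lemma differentiableAt_zeta2 (hτ : 0 < τ.im) (h2 : theta2 u τ ≠ 0) :
    DifferentiableAt ℂ (zeta2 · τ) u :=
  ((differentiable_theta2 hτ).deriv u).div (differentiable_theta2 hτ u) h2

lemma differentiableAt_zeta4 (hτ : 0 < τ.im) (h4 : theta4 u τ ≠ 0) :
    DifferentiableAt ℂ (zeta4 · τ) u :=
  ((differentiable_theta4 hτ).deriv u).div (differentiable_theta4 hτ u) h4

lemma hasDerivAt_Sp (hτ : 0 < τ.im) (h1 : theta1 u τ ≠ 0) (h4 : theta4 u τ ≠ 0) :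
    HasDerivAt (Sp · τ) (Spp u τ) u :=
  ((differentiableAt_zeta1 hτ h1).sub (differentiableAt_zeta4 hτ h4)).hasDerivAt

lemma zeta1_neg (u τ : ℂ) : zeta1 (-u) τ = -zeta1 u τ := by
  have h := deriv_comp_neg (theta1 · τ) u
  simp only [theta1_neg, deriv.fun_neg, neg_inj] at h
  rw [zeta1, zeta1, theta1_neg, ← h, div_neg]

lemma wp1_neg (u τ : ℂ) : wp1 (-u) τ = wp1 u τ := by
  have h := deriv_comp_neg (zeta1 · τ) u
  simp only [zeta1_neg, deriv.fun_neg, neg_inj] at h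
  rw [wp1, wp1, h]

lemma theta2_zero_ne_zero_and_theta1_ne_zero (hτ : 0 < τ.im) (h1 : theta1 u (2 * τ) ≠ 0)
    (h4 : theta4 u (2 * τ) ≠ 0) : theta2 0 τ ≠ 0 ∧ theta1 u τ ≠ 0 := by
  rw [← mul_ne_zero_iff, theta2_zero_mul_theta1 hτ]
  exact mul_ne_zero two_ne_zero (mul_ne_zero h1 h4)

lemma Sp_two_mul (hτ : 0 < τ.im) (h1 : theta1 u (2 * τ) ≠ 0) (h4 : theta4 u (2 * τ) ≠ 0) :
    Sp u (2 * τ) = thetaConst τ * (theta2 u τ / theta1 u τ) := by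
  rw [Sp, zeta1, zeta4, thetaConst, div_sub_div _ _ h1 h4, div_mul_div_comm,
    deriv_theta1_zero_mul_theta2 hτ, theta2_zero_mul_theta1 hτ, mul_div_mul_left _ _ two_ne_zero]

lemma theta2_mul_two_mul_zeta2_two_mul (hτ : 0 < τ.im) (h0 : theta2 0 τ ≠ 0)
    (h2 : theta2 u (2 * τ) ≠ 0) :
    theta2 u τ * (2 * zeta2 u (2 * τ)) =
      deriv (theta2 · τ) u - thetaConst τ * theta1 u τ := by
  have hprod := theta2_zero_mul_theta2 hτ u
  have hderiv := theta2_zero_mul_deriv_theta2 hτ u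
  have hwronskian := deriv_theta1_zero_mul_theta1 hτ u
  rw [zeta2, thetaConst]
  field_simp
  linear_combination 2 * deriv (theta2 · (2 * τ)) u * hprod - theta2 u (2 * τ) * hderiv +
    theta2 u (2 * τ) * hwronskian

lemma theta2_mul_zeta1_sub_zeta1_add (hτ : 0 < τ.im) (h0 : theta2 0 τ ≠ 0)
    (hw : theta1 w τ ≠ 0) (huw : theta1 (u + w) τ ≠ 0) :
    theta2 u τ * (zeta1 w τ - zeta1 (u + w) τ) + deriv (theta2 · τ) u =
      thetaConst τ * theta1 u τ * (theta2 (u + w) τ / theta1 (u + w) τ) *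
        (theta2 w τ / theta1 w τ) := by
  have h := theta1_theta2_addition hτ u w
  rw [zeta1, zeta1, thetaConst]
  field_simp
  linear_combination h

theorem Sp_mul_zeta_sub_Sp_mul_Sp (hτ : 0 < τ.im)
    (hu1 : theta1 u (2 * τ) ≠ 0) (hu4 : theta4 u (2 * τ) ≠ 0) (hu2 : theta2 u (2 * τ) ≠ 0)
    (hw1 : theta1 w (2 * τ) ≠ 0) (hw4 : theta4 w (2 * τ) ≠ 0)
    (huw1 : theta1 (u + w) (2 * τ) ≠ 0) (huw4 : theta4 (u + w) (2 * τ) ≠ 0) :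
    Sp u (2 * τ) * (zeta1 w τ - zeta1 (u + w) τ + 2 * zeta2 u (2 * τ)) -
      Sp (u + w) (2 * τ) * Sp w (2 * τ) = -thetaConst τ ^ 2 := by
  obtain ⟨h0, hu⟩ := theta2_zero_ne_zero_and_theta1_ne_zero hτ hu1 hu4
  obtain ⟨-, hw⟩ := theta2_zero_ne_zero_and_theta1_ne_zero hτ hw1 hw4
  obtain ⟨-, huw⟩ := theta2_zero_ne_zero_and_theta1_ne_zero hτ huw1 huw4
  have hadd := theta2_mul_zeta1_sub_zeta1_add (u := u) hτ h0 hw huw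
  have hdouble := theta2_mul_two_mul_zeta2_two_mul hτ h0 hu2
  rw [Sp_two_mul hτ hu1 hu4, Sp_two_mul hτ hw1 hw4, Sp_two_mul hτ huw1 huw4]
  generalize theta2 w τ / theta1 w τ = r, theta2 (u + w) τ / theta1 (u + w) τ = s at *
  field_simp
  linear_combination thetaConst τ * (hadd + hdouble)

theorem Sp_mul_zeta_sub_Sp_mul_Sp_eventuallyEq {x y : ℂ} (hτ : 0 < τ.im)
    (hx1 : theta1 x (2 * τ) ≠ 0) (hx4 : theta4 x (2 * τ) ≠ 0) (hx2 : theta2 x (2 * τ) ≠ 0)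
    (hy1 : theta1 y (2 * τ) ≠ 0) (hy4 : theta4 y (2 * τ) ≠ 0)
    (hyx1 : theta1 (y - x) (2 * τ) ≠ 0) (hyx4 : theta4 (y - x) (2 * τ) ≠ 0) :
    (fun u ↦ Sp u (2 * τ) * (zeta1 (y - u) τ - zeta1 y τ + 2 * zeta2 u (2 * τ)) -
      Sp y (2 * τ) * Sp (y - u) (2 * τ)) =ᶠ[𝓝 x] fun _ ↦ -thetaConst τ ^ 2 := by
  have h2τ : 0 < (2 * τ).im := by simpa using hτ
  have d1 := (differentiable_theta1 h2τ).continuous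
  have d2 := (differentiable_theta2 h2τ).continuous
  have d4 := (differentiable_theta4 h2τ).continuous
  have hsub : Continuous fun u ↦ y - u := by fun_prop
  filter_upwards [d1.continuousAt.eventually_ne hx1, d4.continuousAt.eventually_ne hx4,
    d2.continuousAt.eventually_ne hx2, (d1.comp hsub).continuousAt.eventually_ne hyx1,
    (d4.comp hsub).continuousAt.eventually_ne hyx4] with u hu1 hu4 hu2 hw1 hw4
  simpa only [add_sub_cancel] using Sp_mul_zeta_sub_Sp_mul_Sp hτ hu1 hu4 hu2 hw1 hw4
    (by rwa [add_sub_cancel]) (by rwa [add_sub_cancel])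

end Zeta

/-- Identity (c5) of Appendix C. -/
theorem identity_c5 (τ x y : ℂ) (hτ : 0 < τ.im)
    (h1 : theta1 x τ ≠ 0) (h2 : theta4 x τ ≠ 0)
    (h3 : theta1 y τ ≠ 0) (h4 : theta4 y τ ≠ 0)
    (h5 : theta1 (y - x) τ ≠ 0) (h6 : theta4 (y - x) τ ≠ 0)
    (h7 : theta1 (y - x) (τ / 2) ≠ 0) (h8 : theta1 y (τ / 2) ≠ 0)
    (h9 : theta1 (x - y) (τ / 2) ≠ 0)
    (h10 : theta2 x τ ≠ 0) :
    Spp x τ * zeta1 (y - x) (τ / 2) - Spp x τ * zeta1 y (τ / 2)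
      + Sp x τ * wp1 (x - y) (τ / 2)
      + 2 * Spp x τ * zeta2 x τ - 2 * Sp x τ * wp2 x τ
      + Sp y τ * Spp (y - x) τ = 0 := by
  obtain ⟨σ, rfl⟩ : ∃ σ, τ = 2 * σ := ⟨τ / 2, by ring⟩
  rw [mul_div_cancel_left₀ σ two_ne_zero] at h7 ⊢
  have hσ : 0 < σ.im := by simpa using hτ
  have hconst := Sp_mul_zeta_sub_Sp_mul_Sp_eventuallyEq hσ h1 h2 h10 h3 h4 h5 h6
  have hSp := hasDerivAt_Sp hτ h1 h2
  have hzeta1 := (differentiableAt_zeta1 hσ h7).hasDerivAt.comp_const_sub y x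
  have hzeta2 := (differentiableAt_zeta2 hτ h10).hasDerivAt.const_mul 2
  have hSp_sub := ((hasDerivAt_Sp hτ h5 h6).comp_const_sub y x).const_mul (Sp y (2 * σ))
  have hderiv := (hSp.mul ((hzeta1.sub_const (zeta1 y σ)).add hzeta2)).sub hSp_sub
  have hzero := hderiv.unique ((hasDerivAt_const x _).congr_of_eventuallyEq hconst)
  simp only [Pi.add_apply] at hzero
  rw [← wp1_neg, neg_sub, wp1, wp2]
  linear_combination hzero
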